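/- Let t be an even positive integer, let M be a matroid, and let e_1, e_2, …, e_n be an even t-cyclic ordering of M. Let P = {e_{i+1}, e_{i+2}, …, e_{i+k}} be a set of k consecutive elements such that i+1 is odd (parity modulo n, which is even), |P| is even, |P| ≥ t−2, and |E(M) − P| ≥ t−2. Then r(P) = (|P| + t − 2)/2. -/

import Mathlib

open Set

namespace CyclicArr

variable {α : Type*}

/-- `C` is a circuit of the matroid `M`: a minimal dependent set. -/
def Cct (M : Matroid α) (C : Set α) : Prop := Minimal M.Dep C

/-- The set of `len` consecutive elements `{e_i, e_{i+1}, …, e_{i+len-1}}`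
in a cyclic ordering `e`, subscripts mod `n`. -/
def seg {n : ℕ} (e : ZMod n → α) (i : ℤ) (len : ℕ) : Set α :=
  (fun k : ℕ => e ((i + k : ℤ) : ZMod n)) '' Set.Iio len

/-- `e` is a cyclic ordering of (the ground set of) `M`. -/
def CyclicOrd {n : ℕ} (M : Matroid α) (e : ZMod n → α) : Prop :=
  Function.Injective e ∧ Set.range e = M.E

/-- `e` is a cyclic `(t-1, t)`-ordering of `M`: every `t-1` consecutive elements
are contained in a `t`-element circuit and a `t`-element cocircuit. -/
def CyclicPropOrd {n : ℕ} (M : Matroid α) (t : ℕ) (e : ZMod n → α) : Prop :=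
  CyclicOrd M e ∧
  ∀ i : ℤ, (∃ C, Cct M C ∧ C.ncard = t ∧ seg e i (t-1) ⊆ C) ∧
           (∃ C, Cct M✶ C ∧ C.ncard = t ∧ seg e i (t-1) ⊆ C)

/-- `M` has the cyclic `(t-1, t)`-property: it admits a cyclic `(t-1, t)`-ordering. -/
def HasCycProp (M : Matroid α) (t : ℕ) : Prop :=
  ∃ (n : ℕ) (e : ZMod n → α), CyclicPropOrd M t e

/-- `e` is an odd `t`-cyclic ordering of `M` (with `n ≥ t+1`): for all odd `i ∈ {1,…,n}`,
`{e_i, …, e_{i+t-1}}` is a `t`-element circuit and `{e_{i+1}, …, e_{i+t}}` is a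
`t`-element cocircuit. -/
def OddTCycOrd {n : ℕ} (M : Matroid α) (t : ℕ) (e : ZMod n → α) : Prop :=
  CyclicOrd M e ∧ t + 1 ≤ n ∧
  ∀ i : ℕ, Odd i → 1 ≤ i → i ≤ n →
    (Cct M (seg e (i : ℤ) t) ∧ (seg e (i : ℤ) t).ncard = t) ∧
    (Cct M✶ (seg e ((i : ℤ) + 1) t) ∧ (seg e ((i : ℤ) + 1) t).ncard = t)

/-- `e` is an even `t`-cyclic ordering of `M` (with `n ≥ t+1`): for all odd `i ∈ {1,…,n}`,
`{e_i, …, e_{i+t-1}}` is both a `t`-element circuit and a `t`-element cocircuit. -/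
def EvenTCycOrd {n : ℕ} (M : Matroid α) (t : ℕ) (e : ZMod n → α) : Prop :=
  CyclicOrd M e ∧ t + 1 ≤ n ∧
  ∀ i : ℕ, Odd i → 1 ≤ i → i ≤ n →
    Cct M (seg e (i : ℤ) t) ∧ Cct M✶ (seg e (i : ℤ) t) ∧ (seg e (i : ℤ) t).ncard = t

/-- `M` is `t`-cyclic: it admits an odd or even `t`-cyclic ordering. -/
def TCyclic (M : Matroid α) (t : ℕ) : Prop :=
  ∃ (n : ℕ) (e : ZMod n → α), OddTCycOrd M t e ∨ EvenTCycOrd M t e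

/-- The rank of a set `X` in a matroid `M`: the maximum cardinality of an
independent subset of `X` (for a finite matroid). -/
noncomputable def rkf (M : Matroid α) (X : Set α) : ℕ :=
  sSup {k | ∃ I, M.Indep I ∧ I ⊆ X ∧ I.ncard = k}

/-- The connectivity function `λ(X) = r(X) + r*(X) - |X|`, valued in `ℤ`. -/
noncomputable def lam (M : Matroid α) (X : Set α) : ℤ :=
  (rkf M X : ℤ) + (rkf M✶ X : ℤ) - (X.ncard : ℤ)

/-- The local connectivity `⊓(X, Y) = r(X) + r(Y) - r(X ∪ Y)`, valued in `ℤ`. -/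
noncomputable def pic (M : Matroid α) (X Y : Set α) : ℤ :=
  (rkf M X : ℤ) + (rkf M Y : ℤ) - (rkf M (X ∪ Y) : ℤ)

/-- `X` is exactly `k`-separating: `λ(X) = k - 1`. -/
noncomputable def ExactSep (M : Matroid α) (k : ℕ) (X : Set α) : Prop :=
  lam M X = (k : ℤ) - 1

/-- `(P_1, …, P_m)` is a concatenation of the cyclic ordering `e`, where `P i` is the
block of `l i` consecutive elements starting at position `a i`, and the blocks occur in
cyclic order and partition the ground set. -/
def IsConcat {n m : ℕ} (e : ZMod n → α) (P : ZMod m → Set α) (a l : ZMod m → ℕ) : Prop :=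
  (∀ i, 1 ≤ l i) ∧
  (∀ i, ((a (i + 1) : ZMod n)) = ((a i + l i : ℕ) : ZMod n)) ∧
  (∀ i, P i = seg e (a i : ℤ) (l i)) ∧
  Set.univ.PairwiseDisjoint P ∧
  (⋃ i, P i) = Set.range e

/-- `(P_1, …, P_m)` is a `k`-flower of `M`: a partition of the ground set into nonempty
sets, each exactly `k`-separating, with consecutive unions exactly `k`-separating. -/
noncomputable def IsFlower (M : Matroid α) (k : ℕ) {m : ℕ} (P : ZMod m → Set α) : Prop :=
  2 ≤ m ∧
  Set.univ.PairwiseDisjoint P ∧ (⋃ i, P i) = M.E ∧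
  (∀ i, (P i).Nonempty) ∧
  (∀ i, ExactSep M k (P i)) ∧
  (3 ≤ m → ∀ i, ExactSep M k (P i ∪ P (i + 1)))

/-- `I ⊆ ZMod m` is a set of consecutive members in the cyclic order. -/
def CycInterval {m : ℕ} (I : Set (ZMod m)) : Prop :=
  ∃ (a : ZMod m) (len : ℕ), 0 < len ∧ I = (fun k : ℕ => a + (k : ZMod m)) '' Set.Iio len

/-- A `k`-daisy: a `k`-flower in which the union of a proper nonempty collection of
petals is exactly `k`-separating precisely when the petals are consecutive. -/
noncomputable def IsDaisy (M : Matroid α) (k : ℕ) {m : ℕ} (P : ZMod m → Set α) : Prop :=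
  IsFlower M k P ∧
  ∀ I : Set (ZMod m), I.Nonempty → I ≠ Set.univ →
    (ExactSep M k (⋃ i ∈ I, P i) ↔ CycInterval I)

/-- A `k`-anemone: a `k`-flower in which the union of every proper nonempty collection
of petals is exactly `k`-separating. -/
noncomputable def IsAnemone (M : Matroid α) (k : ℕ) {m : ℕ} (P : ZMod m → Set α) : Prop :=
  IsFlower M k P ∧
  ∀ I : Set (ZMod m), I.Nonempty → I ≠ Set.univ → ExactSep M k (⋃ i ∈ I, P i)


theorem rkf_eq (M : Matroid α) [M.Finite] (X : Set α) : (rkf M X : ℕ∞) = M.eRk X := by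
  obtain ⟨I, hI⟩ := M.exists_isBasis' X
  have hfin : ∀ J, M.Indep J → J.Finite := fun J hJ => M.ground_finite.subset hJ.subset_ground
  rw [← hI.encard_eq_eRk, ← (hfin I hI.indep).cast_ncard_eq]
  congr 1
  apply IsGreatest.csSup_eq
  refine ⟨⟨I, hI.indep, hI.subset, rfl⟩, ?_⟩
  rintro k ⟨J, hJ, hJX, rfl⟩
  have h := hJ.encard_le_eRk_of_subset hJX
  rw [← hI.encard_eq_eRk, ← (hfin I hI.indep).cast_ncard_eq, ← (hfin J hJ).cast_ncard_eq] at h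
  exact_mod_cast h

theorem rkf_mono (M : Matroid α) [M.Finite] {X Y : Set α} (h : X ⊆ Y) : rkf M X ≤ rkf M Y := by
  have := M.eRk_mono h
  rw [← rkf_eq, ← rkf_eq] at this
  exact_mod_cast this

theorem rkf_insert (M : Matroid α) [M.Finite] (x : α) (X : Set α) :
    rkf M (insert x X) ≤ rkf M X + 1 := by
  have := M.eRk_insert_le_add_one x X
  rw [← rkf_eq, ← rkf_eq] at this
  exact_mod_cast this

theorem rkf_insert_closure (M : Matroid α) [M.Finite] {x : α} {X : Set α}
    (hx : x ∈ M.closure X) : rkf M (insert x X) = rkf M X := by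
  have := M.eRk_closure_eq (insert x X)
  rw [Matroid.closure_insert_eq_of_mem_closure hx, M.eRk_closure_eq, ← rkf_eq, ← rkf_eq] at this
  exact_mod_cast this.symm

theorem rkf_indep (M : Matroid α) [M.Finite] {X : Set α} (hX : M.Indep X) :
    rkf M X = X.ncard := by
  have := hX.eRk_eq_encard
  rw [← rkf_eq, ← (M.ground_finite.subset hX.subset_ground).cast_ncard_eq] at this
  exact_mod_cast this

theorem rkf_le_ncard (M : Matroid α) [M.Finite] {X : Set α} (hX : X.Finite) :
    rkf M X ≤ X.ncard := by
  have := M.eRk_le_encard X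
  rw [← rkf_eq, ← hX.cast_ncard_eq] at this
  exact_mod_cast this

theorem rkf_dual (M : Matroid α) [M.Finite] : rkf M M.E + rkf M✶ M.E = M.E.ncard := by
  obtain ⟨B, hB⟩ := M.exists_isBase
  have h1 : rkf M M.E = B.ncard := by
    have := hB.eRk_eq_eRank
    rw [← M.eRk_ground, ← rkf_eq, ← rkf_eq] at this
    rw [← rkf_indep M hB.indep]; exact_mod_cast this.symm
  have h2 : rkf M✶ M.E = (M.E \ B).ncard := by
    have hB' := hB.compl_isBase_dual
    have := hB'.eRk_eq_eRank
    rw [← M✶.eRk_ground, ← rkf_eq, ← rkf_eq] at this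
    rw [← rkf_indep M✶ hB'.indep]; exact_mod_cast this.symm
  rw [h1, h2, add_comm]
  exact Set.ncard_sdiff_add_ncard_of_subset hB.subset_ground M.ground_finite

theorem rkf_compl (M : Matroid α) [M.Finite] {X : Set α} (hX : M✶.Indep (M.E \ X)) :
    rkf M M.E ≤ rkf M X := by
  obtain ⟨B, hB, hBX⟩ := Matroid.Coindep.exists_isBase_subset_compl hX
  have := hB.eRk_eq_eRank
  rw [← M.eRk_ground, ← rkf_eq, ← rkf_eq] at this
  have h2 : rkf M B = rkf M M.E := by exact_mod_cast this
  rw [← h2]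
  apply rkf_mono
  intro b hb
  by_contra hbX
  exact (hBX hb).2 ⟨(hBX hb).1, hbX⟩

theorem rkf_circuit (M : Matroid α) [M.Finite] {C : Set α} (hC : Cct M C) :
    C.ncard ≤ rkf M M.E + 1 := by
  have hC' : M.IsCircuit C := hC
  obtain ⟨x, hx⟩ := hC'.nonempty
  have h := rkf_indep M (hC'.sdiff_singleton_indep hx)
  have hf := M.ground_finite.subset hC'.subset_ground
  have := Set.ncard_sdiff_singleton_add_one hx hf
  have h3 := rkf_mono M (show C \ {x} ⊆ M.E from (Set.sdiff_subset).trans hC'.subset_ground)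
  omega

theorem seg_mem {n : ℕ} (e : ZMod n → α) (a : ℤ) (len : ℕ) (b : ℤ) (h1 : a ≤ b)
    (h2 : b < a + len) : e (b : ZMod n) ∈ seg e a len := by
  refine ⟨(b - a).toNat, ?_, ?_⟩
  · simp only [Set.mem_Iio]; omega
  · have : a + ((b - a).toNat : ℤ) = b := by omega
    simp only [this]

theorem seg_mem_iff {n : ℕ} (e : ZMod n → α) (a : ℤ) (len : ℕ) (x : α) :
    x ∈ seg e a len ↔ ∃ b : ℤ, a ≤ b ∧ b < a + len ∧ e (b : ZMod n) = x := by
  constructor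
  · rintro ⟨k, hk, rfl⟩
    simp only [Set.mem_Iio] at hk
    exact ⟨a + k, by omega, by omega, rfl⟩
  · rintro ⟨b, h1, h2, rfl⟩
    exact seg_mem e a len b h1 h2

theorem seg_finite {n : ℕ} (e : ZMod n → α) (a : ℤ) (len : ℕ) : (seg e a len).Finite :=
  (Set.finite_Iio len).image _

theorem seg_ncard_le {n : ℕ} (e : ZMod n → α) (a : ℤ) (len : ℕ) : (seg e a len).ncard ≤ len := by
  refine (Set.ncard_image_le (Set.finite_Iio len)).trans ?_
  simp

theorem seg_congr {n : ℕ} (e : ZMod n → α) (a b : ℤ) (h : (a : ZMod n) = b) (len : ℕ) :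
    seg e a len = seg e b len := by
  simp [seg, h]

theorem compl_seg {n : ℕ} (hn : 0 < n) (e : ZMod n → α) (a : ℤ) (k l : ℕ) (hkl : k + l = n) :
    Set.range e \ seg e a k ⊆ seg e (a + k) l := by
  rintro x ⟨⟨z, rfl⟩, hx⟩
  obtain ⟨c, rfl⟩ := ZMod.intCast_surjective z
  have hn' : (0 : ℤ) < n := by exact_mod_cast hn
  have h1 := Int.emod_nonneg (c - a) hn'.ne'
  have h2 := Int.emod_lt_of_pos (c - a) hn'
  have h3 : ((a + (c - a) % n : ℤ) : ZMod n) = (c : ZMod n) := by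
    rw [ZMod.intCast_eq_intCast_iff]
    have := (Int.mod_modEq (c - a) n).add_left a
    rw [add_sub_cancel] at this
    exact this
  rw [← h3] at hx ⊢
  by_cases hlt : (c - a) % n < k
  · exact absurd (seg_mem e a k _ (by omega) (by omega)) hx
  · exact seg_mem e (a + k) l _ (by omega) (by omega)

theorem chain {n : ℕ} (M : Matroid α) [M.Finite] (t : ℕ) (ht : 2 ≤ t) (hte : Even t)
    (e : ZMod n → α) (hC : ∀ a : ℤ, Odd a → Cct M (seg e a t)) (a : ℤ) (ha : Odd a)
    (len : ℕ) (hl : Even len) (hlt : t ≤ len + 2) (m : ℕ) :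
    rkf M (seg e a (len + 2 * m)) ≤ rkf M (seg e a len) + m := by
  induction m with
  | zero => simp
  | succ m ih =>
    set L := len + 2 * m with hL
    have hsub : seg e a (len + 2 * (m + 1)) ⊆
        insert (e ((a + L + 1 : ℤ) : ZMod n)) (insert (e ((a + L : ℤ) : ZMod n)) (seg e a L)) := by
      intro x hx
      obtain ⟨b, h1, h2, rfl⟩ := (seg_mem_iff _ _ _ _).1 hx
      have h2' : b < a + L + 2 := by omega
      rcases (by omega : b = a + L + 1 ∨ b = a + L ∨ b < a + L) with h | h | h
      · left; rw [h]
      · right; left; rw [h]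
      · right; right; exact seg_mem _ _ _ _ h1 h
    have hcl : e ((a + L + 1 : ℤ) : ZMod n) ∈
        M.closure (insert (e ((a + L : ℤ) : ZMod n)) (seg e a L)) := by
      have hodd : Odd (a + L + 2 - t : ℤ) := by
        have : Even (L : ℤ) := by
          rw [hL]; push_cast
          exact (by exact_mod_cast hl : Even (len : ℤ)).add (even_two_mul _)
        have h2 : Even (t : ℤ) := by exact_mod_cast hte
        exact ((ha.add_even this).add_even even_two).sub_even h2
      have hcir : M.IsCircuit _ := hC _ hodd
      have hmem : e ((a + L + 1 : ℤ) : ZMod n) ∈ seg e (a + L + 2 - t : ℤ) t :=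
        seg_mem _ _ _ _ (by omega) (by omega)
      refine M.closure_subset_closure ?_ (hcir.mem_closure_sdiff_singleton_of_mem hmem)
      rintro x ⟨hx, hne⟩
      obtain ⟨b, h1, h2, rfl⟩ := (seg_mem_iff _ _ _ _).1 hx
      rcases (by omega : b = a + L + 1 ∨ b = a + L ∨ b < a + L) with h | h | h
      · exact absurd (by rw [h]; rfl) hne
      · left; rw [h]
      · right; exact seg_mem _ _ _ _ (by omega) h
    have h1 := rkf_mono M hsub
    rw [rkf_insert_closure M hcl] at h1
    have h2 := rkf_insert M (e ((a + L : ℤ) : ZMod n)) (seg e a L)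
    omega

/-- Rank bound on the whole matroid. -/
theorem rank_le_long {n : ℕ} (M : Matroid α) [M.Finite] (t : ℕ) (ht : 2 ≤ t)
    (e : ZMod n → α) (hn : 0 < n) (hE : Set.range e = M.E)
    (hC : ∀ a : ℤ, Odd a → Cct M✶ (seg e a t) ∧ (seg e a t).ncard = t) (a : ℤ)
    (l : ℕ) (hl : l + (t - 2) = n) (ha : Odd (a + l)) :
    rkf M M.E ≤ rkf M (seg e a l) := by
  apply rkf_compl
  have h1 := compl_seg hn e a l (t - 2) hl
  rw [hE] at h1
  obtain ⟨hc, hcard⟩ := hC _ ha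
  have hc' : M✶.IsCircuit _ := hc
  refine Matroid.Indep.subset (hc'.ssubset_indep ⟨?_, ?_⟩) h1
  · intro x hx
    obtain ⟨b, h1, h2, rfl⟩ := (seg_mem_iff _ _ _ _).1 hx
    exact seg_mem _ _ _ _ (by omega) (by omega)
  · intro hss
    have := Set.ncard_le_ncard hss (seg_finite _ _ _)
    have := seg_ncard_le e (a + l) (t - 2)
    omega

theorem even_n (M : Matroid α) [M.Finite] (t n : ℕ) (ht : 2 ≤ t) (hteven : Even t)
    (e : ZMod n → α) (he : EvenTCycOrd M t e) (hcard : M.E.ncard = n) : Even n := by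
  obtain ⟨⟨hinj, hE⟩, hn, hcc⟩ := he
  by_contra hodd
  rw [Nat.not_even_iff_odd] at hodd
  obtain ⟨c1, c2, c3⟩ := hcc 1 odd_one le_rfl (by omega)
  have h1 := rkf_circuit M c1
  have h2 := rkf_circuit M✶ c2
  have h3 := rkf_dual M
  rw [Matroid.dual_ground] at h2
  have hn2 : 2 * t - 1 ≤ n := by
    obtain ⟨q, hq⟩ := hodd
    omega
  have ho : Odd (n - t + 2) := by
    obtain ⟨q, hq⟩ := hodd
    obtain ⟨s, hs⟩ := hteven
    exact ⟨q - s + 1, by omega⟩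
  obtain ⟨-, d2, -⟩ := hcc (n - t + 2) ho (by omega) (by omega)
  have c1' : M.IsCircuit _ := c1
  have d2' : M.IsCocircuit _ := d2
  refine c1'.inter_isCocircuit_ne_singleton d2' (e := e ((1 : ℤ) : ZMod n)) ?_
  have hb1 : e ((1 : ℤ) : ZMod n) = e ((n + 1 : ℤ) : ZMod n) := by simp
  apply Set.eq_singleton_iff_unique_mem.2
  refine ⟨⟨seg_mem _ _ _ _ (by simp) (by push_cast; omega), ?_⟩, ?_⟩
  · rw [hb1]
    exact seg_mem _ _ _ _ (by omega) (by omega)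
  · rintro x ⟨hx1, hx2⟩
    obtain ⟨b, b1, b2, rfl⟩ := (seg_mem_iff _ _ _ _).1 hx1
    obtain ⟨c, c1, c2, hbc⟩ := (seg_mem_iff _ _ _ _).1 hx2
    have := hinj hbc
    rw [ZMod.intCast_eq_intCast_iff_dvd_sub] at this
    obtain ⟨q, hq⟩ := this
    have hq1 : q = -1 := by
      have u1 : q < 0 := by
        by_contra hcon
        have : (0:ℤ) ≤ n * q := mul_nonneg (by omega) (by omega)
        omega
      have u2 : -2 < q := by
        by_contra hcon
        have : (n:ℤ) * q ≤ n * (-2) := mul_le_mul_of_nonneg_left (by omega) (by omega)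
        omega
      omega
    subst hq1
    have : b = 1 := by omega
    rw [this]

/-- Let `t` be an even positive integer and `e` an even `t`-cyclic
ordering of `M`. If `P = {e_{i+1},…,e_{i+k}}` with `i+1` odd, `|P|` even, `|P| ≥ t-2` and
`|E(M) - P| ≥ t-2`, then `r(P) = (|P| + t - 2)/2`. -/
theorem statement_15 (M : Matroid α) (t n : ℕ) (ht : 1 ≤ t) (hteven : Even t)
    (e : ZMod n → α) (he : EvenTCycOrd M t e) (i k : ℕ) (hk : k ≤ n)
    (hstart : Odd (i + 1)) (hkeven : Even k) (hsize : t - 2 ≤ k)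
    (P : Set α) (hP : P = seg e ((i : ℤ) + 1) k)
    (hcosize : t - 2 ≤ (M.E \ P).ncard) :
    2 * rkf M P + 2 = k + t := by
  have ht2 : 2 ≤ t := by obtain ⟨s, hs⟩ := hteven; omega
  have he' := he
  obtain ⟨⟨hinj, hE⟩, hn, hcc⟩ := he
  have : NeZero n := ⟨by omega⟩
  have : M.Finite := ⟨by rw [← hE]; exact Set.finite_range e⟩
  have hcard : M.E.ncard = n := by
    rw [← hE, ← Set.image_univ, Set.ncard_image_of_injective _ hinj, Set.ncard_univ, Nat.card_zmod]
  have hne : Even n := even_n M t n ht2 hteven e he' hcard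
  have hall : ∀ a : ℤ, Odd a →
      Cct M (seg e a t) ∧ Cct M✶ (seg e a t) ∧ (seg e a t).ncard = t := by
    intro a ha
    have h1 := Int.emod_nonneg a (b := (n : ℤ)) (by omega)
    have h2 := Int.emod_lt_of_pos a (b := (n : ℤ)) (by omega)
    have h4 : Odd (a % n) := by
      have hz : Even (n : ℤ) := by exact_mod_cast hne
      rw [Int.emod_def]
      exact ha.sub_even (hz.mul_right _)
    have h5 : ((a % n).toNat : ℤ) = a % n := by omega
    have h6 : Odd (a % n).toNat := by
      rw [← h5] at h4; exact_mod_cast h4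
    have h7 : 1 ≤ (a % n).toNat := h6.pos
    have := hcc (a % n).toNat h6 h7 (by omega)
    rw [h5] at this
    rwa [seg_congr e (a % n) a (by simp)] at this
  have ha : Odd ((i : ℤ) + 1) := by exact_mod_cast hstart
  set a : ℤ := (i : ℤ) + 1 with haa
  have hkn : k + (t - 2) ≤ n := by
    have h1 := compl_seg (by omega) e a k (n - k) (by omega)
    rw [hE, ← hP] at h1
    have h2 := Set.ncard_le_ncard h1 (seg_finite _ _ _)
    have h3 := seg_ncard_le e (a + k) (n - k)
    omega
  obtain ⟨s, hs⟩ := hteven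
  obtain ⟨p, hp⟩ := hkeven
  obtain ⟨q, hq⟩ := hne
  have hlodd : Odd (a + ((n - (t - 2) : ℕ) : ℤ)) := by
    apply ha.add_even
    exact ⟨(q : ℤ) - s + 1, by omega⟩
  have hC1 : ∀ a : ℤ, Odd a → Cct M (seg e a t) := fun a h => (hall a h).1
  have hC2 : ∀ a : ℤ, Odd a → Cct M✶ (seg e a t) := fun a h => (hall a h).2.1
  have hteven : Even t := ⟨s, hs⟩
  have hte2 : Even (t - 2) := ⟨s - 1, by omega⟩
  -- rank bounds
  have A1 := rank_le_long M t ht2 e (by omega) hE (fun a h => (hall a h).2) a (n - (t - 2))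
    (by omega) hlodd
  have A2 := rank_le_long M✶ t ht2 e (by omega) hE
    (fun a h => ⟨by rw [Matroid.dual_dual]; exact (hall a h).1, (hall a h).2.2⟩) a (n - (t - 2))
    (by omega) hlodd
  have B0 := rkf_dual M
  rw [Matroid.dual_ground] at A2
  have B1 := chain M t ht2 hteven e hC1 a ha (t - 2) hte2 (by omega) (q - (t - 2))
  have B2 := chain M✶ t ht2 hteven e hC2 a ha (t - 2) hte2 (by omega) (q - (t - 2))
  have B3 := chain M t ht2 hteven e hC1 a ha (t - 2) hte2 (by omega) (p - (s - 1))
  have B4 := chain M t ht2 hteven e hC1 a ha k ⟨p, hp⟩ (by omega) (q - (s - 1) - p)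
  rw [show t - 2 + 2 * (q - (t - 2)) = n - (t - 2) by omega] at B1 B2
  rw [show t - 2 + 2 * (p - (s - 1)) = k by omega] at B3
  rw [show k + 2 * (q - (s - 1) - p) = n - (t - 2) by omega] at B4
  have D1 := (rkf_le_ncard M (seg_finite e a (t - 2))).trans (seg_ncard_le e a (t - 2))
  have D2 := (rkf_le_ncard M✶ (seg_finite e a (t - 2))).trans (seg_ncard_le e a (t - 2))
  rw [hP]
  omega

end CyclicArr
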